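/- Assume (A(t), B(t)) is totally controllable on [0,1]. Then for all s, t₁, t₂ ∈ [0,1]: if s < t₁ < t₂, then 0 ≺ −Φ₁₁(t₁,s)⁻¹Φ₁₂(t₁,s) ≺ −Φ₁₁(t₂,s)⁻¹Φ₁₂(t₂,s); and if t₁ < t₂ < s, then −Φ₁₁(t₁,s)⁻¹Φ₁₂(t₁,s) ≺ −Φ₁₁(t₂,s)⁻¹Φ₁₂(t₂,s) ≺ 0. Here X ≺ Y means Y − X is positive definite. -/

import Mathlib

open Matrix

/-- `IsSTM F Φ`: `Φ` is the state transition matrix of `F`, i.e. for each fixed `s`,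
`t ↦ Φ t s` solves `X' = F t * X`, `X s = 1` (derivatives taken entrywise). -/
def IsSTM {ι : Type*} [Fintype ι] [DecidableEq ι] (F : ℝ → Matrix ι ι ℝ)
    (Φ : ℝ → ℝ → Matrix ι ι ℝ) : Prop :=
  (∀ s : ℝ, Φ s s = 1) ∧
  ∀ (s t : ℝ) (i j : ι), HasDerivAt (fun t' : ℝ => Φ t' s i j) ((F t * Φ t s) i j) t

/-- `IsCtrbMatSeq A B Γ`: `Γ 0 = B` and `Γ k = -A Γ (k-1) + Γ' (k-1)` for `1 ≤ k ≤ n`,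
i.e. the derivative of each entry of `Γ k` is the corresponding entry of `Γ (k+1) + A * Γ k`,
for `k < n`. -/
def IsCtrbMatSeq {n p : ℕ} (A : ℝ → Matrix (Fin n) (Fin n) ℝ)
    (B : ℝ → Matrix (Fin n) (Fin p) ℝ) (Γ : ℕ → ℝ → Matrix (Fin n) (Fin p) ℝ) : Prop :=
  Γ 0 = B ∧
  ∀ k < n, ∀ (t : ℝ) (i : Fin n) (j : Fin p),
    HasDerivAt (fun τ : ℝ => Γ k τ i j) ((Γ (k + 1) t + A t * Γ k t) i j) t

/-- The controllability matrix `Θₙ(t) = [Γ₀(t) Γ₁(t) ⋯ Γ_{n−1}(t)]`. -/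
def ctrbMat {n p : ℕ} (Γ : ℕ → ℝ → Matrix (Fin n) (Fin p) ℝ) (t : ℝ) :
    Matrix (Fin n) (Fin n × Fin p) ℝ :=
  Matrix.of fun i kj => Γ (kj.1 : ℕ) t i kj.2

/-- Total controllability of `(A(t), B(t))` on `[0,1]`. -/
def TotallyControllable {n p : ℕ} (Γ : ℕ → ℝ → Matrix (Fin n) (Fin p) ℝ) : Prop :=
  ∀ t₀ t₁ : ℝ, 0 ≤ t₀ → t₀ < t₁ → t₁ ≤ 1 →
    ∃ t ∈ Set.Ioo t₀ t₁, (ctrbMat Γ t).rank = n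

/-!
Fix `s`, write `P, R, S, T` for the blocks of `Φ(·, s)`, put `D = B Bᵀ` and `W = -P⁻¹ R`. Since
`W(s) = 0`, everything follows from `W(a) ≺ W(b)` for `0 ≤ a < b ≤ 1`.

`P(t)` is invertible: if `P(t) v = 0`, let `(x, y)` be the solution starting from `(v, 0)` at `s`.
Then `xᵀ y` vanishes at `s` and at `t`, while `(xᵀ y)' = -(yᵀ D y + xᵀ Q x) ≤ 0`, so `D y = 0` and
`Q x = 0` in between. Hence `xᵀ η` is constant between `s` and `t` for every solution `(ξ, η)`, and
the one starting from `(0, v)` gives `vᵀ v = x(t)ᵀ η(t) = 0`.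

`Φ` is symplectic, so `W` is symmetric and `T - S P⁻¹ R = P⁻ᵀ`, whence `W' = P⁻¹ D P⁻ᵀ ≽ 0`. If
`vᵀ W v` takes the same value at `a` and `b`, then `z = P⁻ᵀ v` satisfies `D z = 0`, and therefore
`z' = -Aᵀ z`, on `[a, b]`. Differentiating `Bᵀ z = 0` repeatedly yields `Γ_kᵀ z = 0` for `k < n`, so
controllability makes `z` vanish somewhere and `v = 0`.
-/

/-! ### Linear algebra -/

section LinearAlgebra

variable {ι κ R K : Type*}

theorem eq_zero_of_transpose_mulVec_eq_zero_of_rank_eq_card [Fintype ι] [Fintype κ] [Field K]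
    {M : Matrix ι κ K} (hM : M.rank = Fintype.card ι) {z : ι → K} (hz : Mᵀ *ᵥ z = 0) : z = 0 := by
  have hrows : LinearIndependent K M.row := by
    rw [linearIndependent_iff_card_eq_finrank_span, Set.finrank, ← rank_eq_finrank_span_row, hM]
  refine vecMul_injective_iff.2 hrows ?_
  simpa only [mulVec_transpose, zero_vecMul] using hz

theorem isSymm_of_posSemidef {M : Matrix ι ι ℝ} (hM : M.PosSemidef) : M.IsSymm :=
  isHermitian_iff_isSymm.1 hM.isHermitian

/-- The Hamiltonian matrix `[[A, -D], [-Q, -Aᵀ]]`; in the theorem `D = B Bᵀ`. -/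
def hamiltonianMatrix [Neg R] (A D Q : Matrix ι ι R) : Matrix (ι ⊕ ι) (ι ⊕ ι) R :=
  fromBlocks A (-D) (-Q) (-Aᵀ)

variable [Fintype ι] [DecidableEq ι] [CommRing R]

theorem isSkewAdjoint_hamiltonianMatrix {A D Q : Matrix ι ι R} (hD : D.IsSymm) (hQ : Q.IsSymm) :
    (J ι R).IsSkewAdjoint (hamiltonianMatrix A D Q) := by
  simp [Matrix.IsSkewAdjoint, Matrix.IsAdjointPair, hamiltonianMatrix, J, fromBlocks_transpose,
    fromBlocks_multiply, fromBlocks_neg, hD.eq, hQ.eq]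

/-- The matrix `W = -M₁₁⁻¹ M₁₂` attached to `M = [[M₁₁, M₁₂], [M₂₁, M₂₂]]`. If `M₁₁` is invertible,
the graph `{(W y, y)}` is the preimage under `M` of the plane `{(0, y)}`; otherwise `W = 0`, since
the inverse is then `0`. -/
noncomputable def graphMatrix (M : Matrix (ι ⊕ ι) (ι ⊕ ι) R) : Matrix ι ι R :=
  -(M.toBlocks₁₁⁻¹ * M.toBlocks₁₂)

theorem graphMatrix_one : graphMatrix (1 : Matrix (ι ⊕ ι) (ι ⊕ ι) R) = 0 := by
  rw [← fromBlocks_one, graphMatrix, toBlocks_fromBlocks₁₂, Matrix.mul_zero, neg_zero]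

variable {M : Matrix (ι ⊕ ι) (ι ⊕ ι) R}

theorem isSymm_graphMatrix (hM : M ∈ symplecticGroup ι R) (hu : IsUnit M.toBlocks₁₁) :
    (graphMatrix M).IsSymm := by
  rw [isUnit_iff_isUnit_det] at hu
  have hsymm : M.toBlocks₁₁ * M.toBlocks₁₂ᵀ = M.toBlocks₁₂ * M.toBlocks₁₁ᵀ := by
    have hMt := SymplecticGroup.transpose_mem hM
    rw [← fromBlocks_toBlocks M, fromBlocks_transpose, SymplecticGroup.fromBlocks_mem_iff] at hMt
    simpa only [transpose_transpose] using hMt.1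
  have hdetT : IsUnit (M.toBlocks₁₁ᵀ).det := by rwa [det_transpose]
  rw [IsSymm, graphMatrix, transpose_neg, transpose_mul, transpose_nonsing_inv, neg_inj]
  calc M.toBlocks₁₂ᵀ * M.toBlocks₁₁ᵀ⁻¹
      = M.toBlocks₁₁⁻¹ * (M.toBlocks₁₁ * M.toBlocks₁₂ᵀ) * M.toBlocks₁₁ᵀ⁻¹ := by
        rw [nonsing_inv_mul_cancel_left _ _ hu]
    _ = M.toBlocks₁₁⁻¹ * M.toBlocks₁₂ := by
        rw [hsymm, ← Matrix.mul_assoc, mul_nonsing_inv_cancel_right _ _ hdetT]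

theorem toBlocks₂₂_add_toBlocks₂₁_mul_graphMatrix (hM : M ∈ symplecticGroup ι R)
    (hu : IsUnit M.toBlocks₁₁) :
    M.toBlocks₂₂ + M.toBlocks₂₁ * graphMatrix M = (M.toBlocks₁₁⁻¹)ᵀ := by
  rw [isUnit_iff_isUnit_det] at hu
  rw [← fromBlocks_toBlocks M, SymplecticGroup.fromBlocks_mem_iff] at hM
  obtain ⟨hPS, -, hPT⟩ := hM
  rw [transpose_nonsing_inv]
  refine (inv_eq_right_inv ?_).symm
  rw [graphMatrix, Matrix.mul_neg, ← sub_eq_add_neg, Matrix.mul_sub, ← Matrix.mul_assoc, hPS,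
    Matrix.mul_assoc, mul_nonsing_inv_cancel_left _ _ hu, hPT]

end LinearAlgebra

/-! ### Calculus -/

section MatrixODE

open scoped Matrix.Norms.Operator

section Calculus

variable {𝕜 ι κ : Type*} [NontriviallyNormedField 𝕜] {t : 𝕜}

theorem hasDerivAt_matrix_iff [Finite κ] {F : 𝕜 → Matrix ι κ 𝕜} {F' : Matrix ι κ 𝕜} :
    HasDerivAt F F' t ↔ ∀ i j, HasDerivAt (fun τ => F τ i j) (F' i j) t := by
  have := Fintype.ofFinite κ
  exact hasDerivAt_pi.trans (forall_congr' fun _ => hasDerivAt_pi)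

theorem hasDerivAt_transpose [Finite ι] [Finite κ] {F : 𝕜 → Matrix ι κ 𝕜} {F' : Matrix ι κ 𝕜}
    (hF : HasDerivAt F F' t) : HasDerivAt (fun τ => (F τ)ᵀ) F'ᵀ t :=
  hasDerivAt_matrix_iff.2 fun i j => hasDerivAt_matrix_iff.1 hF j i

variable [Fintype κ]

theorem hasDerivAt_dotProduct {x y : 𝕜 → κ → 𝕜} {x' y' : κ → 𝕜} (hx : HasDerivAt x x' t)
    (hy : HasDerivAt y y' t) :
    HasDerivAt (fun τ => x τ ⬝ᵥ y τ) (x' ⬝ᵥ y t + x t ⬝ᵥ y') t := by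
  simp only [dotProduct, ← Finset.sum_add_distrib]
  exact HasDerivAt.fun_sum fun i _ => (hasDerivAt_pi.1 hx i).mul (hasDerivAt_pi.1 hy i)

theorem hasDerivAt_mulVec {F : 𝕜 → Matrix ι κ 𝕜} {F' : Matrix ι κ 𝕜} {x : 𝕜 → κ → 𝕜} {x' : κ → 𝕜}
    (hF : HasDerivAt F F' t) (hx : HasDerivAt x x' t) :
    HasDerivAt (fun τ => F τ *ᵥ x τ) (F' *ᵥ x t + F t *ᵥ x') t :=
  hasDerivAt_pi.2 fun i => hasDerivAt_dotProduct (hasDerivAt_pi.1 hF i) hx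

theorem hasDerivAt_mulVec_const {F : 𝕜 → Matrix ι κ 𝕜} {F' : Matrix ι κ 𝕜}
    (hF : HasDerivAt F F' t) (v : κ → 𝕜) : HasDerivAt (fun τ => F τ *ᵥ v) (F' *ᵥ v) t := by
  simpa only [mulVec_zero, add_zero] using hasDerivAt_mulVec hF (hasDerivAt_const t v)

theorem hasDerivAt_matrix_inv [CompleteSpace 𝕜] [DecidableEq κ] {F : 𝕜 → Matrix κ κ 𝕜}
    {F' : Matrix κ κ 𝕜} (hF : HasDerivAt F F' t) (hu : IsUnit (F t)) :
    HasDerivAt (fun τ => (F τ)⁻¹) (-((F t)⁻¹ * F' * (F t)⁻¹)) t := by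
  have : @CompleteSpace (Matrix κ κ 𝕜) PseudoMetricSpace.toUniformSpace :=
    FiniteDimensional.complete 𝕜 _
  obtain ⟨u, hu⟩ := hu
  have hinv := hasFDerivAt_ringInverse (𝕜 := 𝕜) u
  rw [hu] at hinv
  simpa [← hu, ← nonsing_inv_eq_ringInverse, Function.comp_def] using!
    hinv.comp_hasDerivAt t hF

theorem hasDerivAt_eq_zero_of_monotoneOn_of_eq {f : ℝ → ℝ} {f' a b t : ℝ} (hab : a < b)
    (hf : MonotoneOn f (Set.Icc a b)) (hfab : f a = f b) (ht : t ∈ Set.Icc a b)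
    (hd : HasDerivWithinAt f f' (Set.Icc a b) t) : f' = 0 := by
  have hconst : ∀ τ ∈ Set.Icc a b, f τ = f a := fun τ hτ =>
    le_antisymm (hfab ▸ hf hτ (Set.right_mem_Icc.2 hab.le) hτ.2)
      (hf (Set.left_mem_Icc.2 hab.le) hτ hτ.1)
  exact (uniqueDiffOn_Icc hab t ht).eq_deriv _ hd
    ((hasDerivWithinAt_const t _ (f a)).congr hconst (hconst t ht))

end Calculus

/-! ### Controllability -/

section Controllability

/-- Dual form of controllability on `[a, b]` of the pair `(A, B)` with `D = B Bᵀ`: the adjoint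
equation `z' = -Aᵀ z` has no nowhere vanishing solution with `D z = 0` on `[a, b]`. Asking for a
single zero rather than `z = 0` avoids any regularity of `A`. -/
def IsControllableOn {ι : Type*} [Fintype ι] (A D : ℝ → Matrix ι ι ℝ) (a b : ℝ) : Prop :=
  ∀ z : ℝ → ι → ℝ, (∀ t ∈ Set.Icc a b, HasDerivAt z (-((A t)ᵀ *ᵥ z t)) t) →
    (∀ t ∈ Set.Icc a b, D t *ᵥ z t = 0) → ∃ t ∈ Set.Icc a b, z t = 0

theorem hasDerivAt_transpose_mulVec_of_adjoint {𝕜 ι κ : Type*} [NontriviallyNormedField 𝕜]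
    [Fintype ι] [Finite κ] {A : Matrix ι ι 𝕜} {G : 𝕜 → Matrix ι κ 𝕜} {H : Matrix ι κ 𝕜}
    {z : 𝕜 → ι → 𝕜} {t : 𝕜} (hG : HasDerivAt G (H + A * G t) t)
    (hz : HasDerivAt z (-(Aᵀ *ᵥ z t)) t) :
    HasDerivAt (fun τ => (G τ)ᵀ *ᵥ z τ) (Hᵀ *ᵥ z t) t := by
  have := Fintype.ofFinite κ
  refine (hasDerivAt_mulVec (hasDerivAt_transpose hG) hz).congr_deriv ?_
  rw [transpose_add, transpose_mul, add_mulVec, mulVec_neg, mulVec_mulVec, add_neg_cancel_right]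

variable {n p : ℕ} {A : ℝ → Matrix (Fin n) (Fin n) ℝ} {B : ℝ → Matrix (Fin n) (Fin p) ℝ}
  {Γ : ℕ → ℝ → Matrix (Fin n) (Fin p) ℝ} {a b : ℝ}

theorem IsCtrbMatSeq.transpose_mulVec_eq_zero (hΓ : IsCtrbMatSeq A B Γ) {z : ℝ → Fin n → ℝ}
    (hz : ∀ t ∈ Set.Ioo a b, HasDerivAt z (-((A t)ᵀ *ᵥ z t)) t)
    (hBz : ∀ t ∈ Set.Ioo a b, (B t)ᵀ *ᵥ z t = 0) {k : ℕ} (hk : k ≤ n) :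
    ∀ t ∈ Set.Ioo a b, (Γ k t)ᵀ *ᵥ z t = 0 := by
  induction k with
  | zero => rwa [hΓ.1]
  | succ k ih =>
    intro t ht
    have hderiv := hasDerivAt_transpose_mulVec_of_adjoint
      (hasDerivAt_matrix_iff.2 (hΓ.2 k hk t)) (hz t ht)
    have hlocal : (fun τ => (Γ k τ)ᵀ *ᵥ z τ) =ᶠ[nhds t] fun _ => 0 :=
      Filter.eventually_of_mem (Ioo_mem_nhds ht.1 ht.2) (ih (Nat.le_of_succ_le hk))
    exact hderiv.unique ((hasDerivAt_const t 0).congr_of_eventuallyEq hlocal)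

theorem TotallyControllable.isControllableOn (hTC : TotallyControllable Γ)
    (hΓ : IsCtrbMatSeq A B Γ) (ha : 0 ≤ a) (hab : a < b) (hb : b ≤ 1) :
    IsControllableOn A (fun t => B t * (B t)ᵀ) a b := by
  intro z hz hDz
  obtain ⟨t, ht, hrank⟩ := hTC a b ha hab hb
  refine ⟨t, Set.Ioo_subset_Icc_self ht,
    eq_zero_of_transpose_mulVec_eq_zero_of_rank_eq_card (hrank.trans (Fintype.card_fin n).symm) ?_⟩
  have hBz : ∀ τ ∈ Set.Ioo a b, (B τ)ᵀ *ᵥ z τ = 0 := fun τ hτ =>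
    (self_mul_conjTranspose_mulVec_eq_zero (B τ) (z τ)).1 (hDz τ (Set.Ioo_subset_Icc_self hτ))
  funext kj
  exact congrFun (hΓ.transpose_mulVec_eq_zero (fun τ hτ => hz τ (Set.Ioo_subset_Icc_self hτ)) hBz
    kj.1.2.le t ht) kj.2

end Controllability

/-! ### State transition matrices -/

namespace IsSTM

variable {ι : Type*} [Fintype ι] [DecidableEq ι]

theorem hasDerivAt {F : ℝ → Matrix ι ι ℝ} {Φ : ℝ → ℝ → Matrix ι ι ℝ} (hΦ : IsSTM F Φ) (s t : ℝ) :
    HasDerivAt (fun τ => Φ τ s) (F t * Φ t s) t :=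
  hasDerivAt_matrix_iff.2 (hΦ.2 s t)

theorem transpose_mul_mul_eq {F : ℝ → Matrix ι ι ℝ} {Φ : ℝ → ℝ → Matrix ι ι ℝ} {K : Matrix ι ι ℝ}
    (hΦ : IsSTM F Φ) (hF : ∀ t, K.IsSkewAdjoint (F t)) (s t : ℝ) :
    (Φ t s)ᵀ * K * Φ t s = K := by
  have hderiv : ∀ τ, HasDerivAt (fun τ => (Φ τ s)ᵀ * K * Φ τ s) 0 τ := by
    intro τ
    have hskew : (F τ)ᵀ * K = K * -F τ := hF τ
    refine (((hasDerivAt_transpose (hΦ.hasDerivAt s τ)).mul_const K).mul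
      (hΦ.hasDerivAt s τ)).congr_deriv ?_
    rw [transpose_mul, Matrix.mul_assoc _ _ K, hskew]
    simp only [Matrix.mul_assoc, Matrix.mul_neg, Matrix.neg_mul, neg_add_cancel]
  calc (Φ t s)ᵀ * K * Φ t s = (Φ s s)ᵀ * K * Φ s s :=
        is_const_of_deriv_eq_zero (fun τ => (hderiv τ).differentiableAt)
          (fun τ => (hderiv τ).deriv) t s
    _ = K := by rw [hΦ.1, transpose_one, Matrix.one_mul, Matrix.mul_one]

section Blocks

variable {F₁₁ F₁₂ F₂₁ F₂₂ : ℝ → Matrix ι ι ℝ} {Φ : ℝ → ℝ → Matrix (ι ⊕ ι) (ι ⊕ ι) ℝ}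
  (hΦ : IsSTM (fun t => fromBlocks (F₁₁ t) (F₁₂ t) (F₂₁ t) (F₂₂ t)) Φ) (s t : ℝ)
include hΦ

theorem hasDerivAt_toBlocks₁₁ :
    HasDerivAt (fun τ => (Φ τ s).toBlocks₁₁)
      (F₁₁ t * (Φ t s).toBlocks₁₁ + F₁₂ t * (Φ t s).toBlocks₂₁) t := by
  refine hasDerivAt_matrix_iff.2 fun i j => (hΦ.2 s t (Sum.inl i) (Sum.inl j)).congr_deriv ?_
  nth_rw 1 [← fromBlocks_toBlocks (Φ t s), fromBlocks_multiply, fromBlocks_apply₁₁]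

theorem hasDerivAt_toBlocks₁₂ :
    HasDerivAt (fun τ => (Φ τ s).toBlocks₁₂)
      (F₁₁ t * (Φ t s).toBlocks₁₂ + F₁₂ t * (Φ t s).toBlocks₂₂) t := by
  refine hasDerivAt_matrix_iff.2 fun i j => (hΦ.2 s t (Sum.inl i) (Sum.inr j)).congr_deriv ?_
  nth_rw 1 [← fromBlocks_toBlocks (Φ t s), fromBlocks_multiply, fromBlocks_apply₁₂]

theorem hasDerivAt_graphMatrix (hu : IsUnit (Φ t s).toBlocks₁₁) :
    HasDerivAt (fun τ => graphMatrix (Φ τ s))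
      (-((Φ t s).toBlocks₁₁⁻¹ * F₁₂ t *
        ((Φ t s).toBlocks₂₂ + (Φ t s).toBlocks₂₁ * graphMatrix (Φ t s)))) t := by
  have hdet := (isUnit_iff_isUnit_det _).1 hu
  refine ((hasDerivAt_matrix_inv (hΦ.hasDerivAt_toBlocks₁₁ s t) hu).mul
    (hΦ.hasDerivAt_toBlocks₁₂ s t)).neg.congr_deriv ?_
  simp only [graphMatrix, Matrix.mul_add, Matrix.add_mul, Matrix.neg_mul, Matrix.mul_neg,
    Matrix.mul_assoc, mul_nonsing_inv_cancel_left _ _ hdet]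
  abel

end Blocks

end IsSTM

/-! ### Hamiltonian systems -/

/-- The pair `(x, y)` solves the Hamiltonian system with matrix `[[A, -D], [-Q, -Aᵀ]]`. -/
structure IsHamiltonianSolution {ι : Type*} [Fintype ι] (A D Q : ℝ → Matrix ι ι ℝ)
    (x y : ℝ → ι → ℝ) : Prop where
  hasDerivAt_fst : ∀ t, HasDerivAt x (A t *ᵥ x t - D t *ᵥ y t) t
  hasDerivAt_snd : ∀ t, HasDerivAt y (-(Q t *ᵥ x t) - (A t)ᵀ *ᵥ y t) t

variable {ι : Type*} [Fintype ι] {A D Q : ℝ → Matrix ι ι ℝ}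

namespace IsHamiltonianSolution

variable {x y ξ η : ℝ → ι → ℝ} {a b : ℝ}

theorem hasDerivAt_dotProduct (h : IsHamiltonianSolution A D Q x y)
    (h' : IsHamiltonianSolution A D Q ξ η) (t : ℝ) :
    HasDerivAt (fun τ => x τ ⬝ᵥ η τ) (-(η t ⬝ᵥ D t *ᵥ y t + x t ⬝ᵥ Q t *ᵥ ξ t)) t := by
  refine (_root_.hasDerivAt_dotProduct (h.hasDerivAt_fst t) (h'.hasDerivAt_snd t)).congr_deriv ?_
  rw [sub_dotProduct, dotProduct_sub, dotProduct_neg, dotProduct_transpose_mulVec,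
    dotProduct_comm (A t *ᵥ x t), dotProduct_comm (D t *ᵥ y t)]
  ring

variable (hD : ∀ t, (D t).PosSemidef) (hQ : ∀ t, (Q t).PosSemidef)
include hD hQ

theorem mulVec_eq_zero_of_dotProduct_eq (h : IsHamiltonianSolution A D Q x y) (hab : a < b)
    (hxy : x a ⬝ᵥ y a = x b ⬝ᵥ y b) {t : ℝ} (ht : t ∈ Set.Icc a b) :
    D t *ᵥ y t = 0 ∧ Q t *ᵥ x t = 0 := by
  have hDy : ∀ τ, 0 ≤ y τ ⬝ᵥ D τ *ᵥ y τ := fun τ => (hD τ).dotProduct_mulVec_nonneg (y τ)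
  have hQx : ∀ τ, 0 ≤ x τ ⬝ᵥ Q τ *ᵥ x τ := fun τ => (hQ τ).dotProduct_mulVec_nonneg (x τ)
  have hderiv : ∀ τ, HasDerivAt (fun τ => -(x τ ⬝ᵥ y τ))
      (y τ ⬝ᵥ D τ *ᵥ y τ + x τ ⬝ᵥ Q τ *ᵥ x τ) τ := fun τ =>
    (h.hasDerivAt_dotProduct h τ).neg.congr_deriv (neg_neg _)
  have hmono := monotone_of_hasDerivAt_nonneg hderiv fun τ => add_nonneg (hDy τ) (hQx τ)
  have hzero := hasDerivAt_eq_zero_of_monotoneOn_of_eq hab (hmono.monotoneOn _)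
    (congrArg Neg.neg hxy) ht (hderiv t).hasDerivWithinAt
  obtain ⟨hDt, hQt⟩ := (add_eq_zero_iff_of_nonneg (hDy t) (hQx t)).1 hzero
  exact ⟨((hD t).dotProduct_mulVec_zero_iff (y t)).1 hDt,
    ((hQ t).dotProduct_mulVec_zero_iff (x t)).1 hQt⟩

theorem dotProduct_eq_of_dotProduct_eq (h : IsHamiltonianSolution A D Q x y)
    (h' : IsHamiltonianSolution A D Q ξ η) (hxy : x a ⬝ᵥ y a = x b ⬝ᵥ y b) :
    x a ⬝ᵥ η a = x b ⬝ᵥ η b := by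
  wlog hab : a < b generalizing a b
  · obtain rfl | hba := (not_lt.1 hab).eq_or_lt
    · rfl
    · exact (this hxy.symm hba).symm
  have hderiv : ∀ t ∈ Set.Icc a b, HasDerivAt (fun τ => x τ ⬝ᵥ η τ) 0 t := by
    intro t ht
    obtain ⟨hDy, hQx⟩ := h.mulVec_eq_zero_of_dotProduct_eq hD hQ hab hxy ht
    refine (h.hasDerivAt_dotProduct h' t).congr_deriv ?_
    rw [hDy, ← isSymm_of_posSemidef (hQ t), dotProduct_transpose_mulVec, hQx]
    simp only [dotProduct_zero, add_zero, neg_zero]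
  exact (constant_of_has_deriv_right_zero
    (fun t ht => (hderiv t ht).continuousAt.continuousWithinAt)
    (fun t ht => (hderiv t (Set.Ico_subset_Icc_self ht)).hasDerivWithinAt)
    b (Set.right_mem_Icc.2 hab.le)).symm

end IsHamiltonianSolution

namespace IsSTM

variable [DecidableEq ι] {Φ : ℝ → ℝ → Matrix (ι ⊕ ι) (ι ⊕ ι) ℝ}
  (hΦ : IsSTM (fun t => hamiltonianMatrix (A t) (D t) (Q t)) Φ)
include hΦ

theorem isHamiltonianSolution (s : ℝ) (u : ι ⊕ ι → ℝ) :
    IsHamiltonianSolution A D Q (fun t => (Φ t s *ᵥ u) ∘ Sum.inl)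
      (fun t => (Φ t s *ᵥ u) ∘ Sum.inr) := by
  have hderiv : ∀ t i, HasDerivAt (fun τ => (Φ τ s *ᵥ u) i)
      ((hamiltonianMatrix (A t) (D t) (Q t) *ᵥ Φ t s *ᵥ u) i) t := fun t => by
    rw [mulVec_mulVec]
    exact hasDerivAt_pi.1 (hasDerivAt_mulVec_const (hΦ.hasDerivAt s t) u)
  simp only [hamiltonianMatrix, fromBlocks_mulVec, neg_mulVec, ← sub_eq_add_neg] at hderiv
  exact ⟨fun t => hasDerivAt_pi.2 fun i => hderiv t (Sum.inl i),
    fun t => hasDerivAt_pi.2 fun i => hderiv t (Sum.inr i)⟩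

theorem mem_symplecticGroup (hD : ∀ t, (D t).IsSymm) (hQ : ∀ t, (Q t).IsSymm) (s t : ℝ) :
    Φ t s ∈ symplecticGroup ι ℝ :=
  SymplecticGroup.mem_iff'.2 <|
    hΦ.transpose_mul_mul_eq (fun τ => isSkewAdjoint_hamiltonianMatrix (hD τ) (hQ τ)) s t

variable (hD : ∀ t, (D t).PosSemidef) (hQ : ∀ t, (Q t).PosSemidef)
include hD hQ

theorem isUnit_toBlocks₁₁ (s t : ℝ) : IsUnit (Φ t s).toBlocks₁₁ := by
  rw [isUnit_iff_isUnit_det, isUnit_iff_ne_zero]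
  intro hdet
  obtain ⟨v, hv, hPv⟩ := exists_mulVec_eq_zero_iff.2 hdet
  have hxt : (Φ t s *ᵥ Sum.elim v 0) ∘ Sum.inl = 0 := by
    rw [← fromBlocks_toBlocks (Φ t s), fromBlocks_mulVec]
    simp [hPv]
  have hpair := (hΦ.isHamiltonianSolution s (Sum.elim v 0)).dotProduct_eq_of_dotProduct_eq hD hQ
    (hΦ.isHamiltonianSolution s (Sum.elim 0 v)) (a := s) (b := t) (by simp [hxt, hΦ.1])
  exact hv (dotProduct_self_eq_zero.1 (by simpa [hxt, hΦ.1] using hpair))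

theorem hasDerivAt_dotProduct_graphMatrix_mulVec (s : ℝ) (v : ι → ℝ) (t : ℝ) :
    HasDerivAt (fun τ => v ⬝ᵥ graphMatrix (Φ τ s) *ᵥ v)
      (((Φ t s).toBlocks₁₁⁻¹ᵀ *ᵥ v) ⬝ᵥ D t *ᵥ (Φ t s).toBlocks₁₁⁻¹ᵀ *ᵥ v) t := by
  have hu := hΦ.isUnit_toBlocks₁₁ hD hQ s t
  have hmem := hΦ.mem_symplecticGroup (fun τ => isSymm_of_posSemidef (hD τ))
    (fun τ => isSymm_of_posSemidef (hQ τ)) s t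
  have hW := hΦ.hasDerivAt_graphMatrix s t hu
  rw [toBlocks₂₂_add_toBlocks₂₁_mul_graphMatrix hmem hu] at hW
  refine (_root_.hasDerivAt_dotProduct (hasDerivAt_const t v)
    (hasDerivAt_mulVec_const hW v)).congr_deriv ?_
  rw [zero_dotProduct, zero_add, Matrix.mul_neg, Matrix.neg_mul, neg_neg, ← mulVec_mulVec,
    ← mulVec_mulVec, dotProduct_mulVec v, mulVec_transpose]

theorem hasDerivAt_inv_toBlocks₁₁_transpose_mulVec {s t : ℝ} {v : ι → ℝ}
    (hDz : D t *ᵥ (Φ t s).toBlocks₁₁⁻¹ᵀ *ᵥ v = 0) :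
    HasDerivAt (fun τ => (Φ τ s).toBlocks₁₁⁻¹ᵀ *ᵥ v)
      (-((A t)ᵀ *ᵥ (Φ t s).toBlocks₁₁⁻¹ᵀ *ᵥ v)) t := by
  have hu := hΦ.isUnit_toBlocks₁₁ hD hQ s t
  refine (hasDerivAt_mulVec_const (hasDerivAt_transpose
    (hasDerivAt_matrix_inv (hΦ.hasDerivAt_toBlocks₁₁ s t) hu)) v).congr_deriv ?_
  have hDsymm : (D t)ᵀ = D t := isSymm_of_posSemidef (hD t)
  have hdet := (isUnit_iff_isUnit_det _).1 hu
  set P := (Φ t s).toBlocks₁₁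
  set S := (Φ t s).toBlocks₂₁
  have hderiv : (-(P⁻¹ * (A t * P + -D t * S) * P⁻¹))ᵀ
      = -((A t)ᵀ * P⁻¹ᵀ) + P⁻¹ᵀ * Sᵀ * (D t * P⁻¹ᵀ) := by
    have hcancel : P⁻¹ᵀ * Pᵀ = 1 := by
      rw [← transpose_mul, mul_nonsing_inv _ hdet, transpose_one]
    simp only [transpose_neg, transpose_mul, transpose_add, hDsymm, Matrix.add_mul,
      Matrix.mul_add, Matrix.mul_neg, Matrix.neg_mul, neg_add, neg_neg, ← Matrix.mul_assoc,
      hcancel, Matrix.one_mul]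
  rw [hderiv, add_mulVec, neg_mulVec, ← mulVec_mulVec, ← mulVec_mulVec, ← mulVec_mulVec v, hDz,
    mulVec_zero, add_zero]

theorem posDef_graphMatrix_sub (s : ℝ) {a b : ℝ} (hab : a < b) (hc : IsControllableOn A D a b) :
    (graphMatrix (Φ b s) - graphMatrix (Φ a s)).PosDef := by
  have hu := hΦ.isUnit_toBlocks₁₁ hD hQ s
  have hsymm : ∀ t, (graphMatrix (Φ t s)).IsSymm := fun t =>
    isSymm_graphMatrix (hΦ.mem_symplecticGroup (fun τ => isSymm_of_posSemidef (hD τ))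
      (fun τ => isSymm_of_posSemidef (hQ τ)) s t) (hu t)
  refine .of_dotProduct_mulVec_pos
    (isHermitian_iff_isSymm.2 ((hsymm b).sub (hsymm a))) fun v hv => ?_
  have hderiv := hΦ.hasDerivAt_dotProduct_graphMatrix_mulVec hD hQ s v
  have hmono := monotone_of_hasDerivAt_nonneg hderiv fun t => (hD t).dotProduct_mulVec_nonneg _
  rw [star_trivial, sub_mulVec, dotProduct_sub, sub_pos]
  refine (hmono hab.le).lt_of_ne fun heq => hv ?_
  have hDz : ∀ t ∈ Set.Icc a b, D t *ᵥ (Φ t s).toBlocks₁₁⁻¹ᵀ *ᵥ v = 0 := fun t ht =>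
    ((hD t).dotProduct_mulVec_zero_iff _).1 (hasDerivAt_eq_zero_of_monotoneOn_of_eq hab
      (hmono.monotoneOn _) heq ht (hderiv t).hasDerivWithinAt)
  obtain ⟨t, -, hzt⟩ := hc _
    (fun t ht => hΦ.hasDerivAt_inv_toBlocks₁₁_transpose_mulVec hD hQ (hDz t ht)) hDz
  have hdet : IsUnit ((Φ t s).toBlocks₁₁⁻¹ᵀ).det := by
    rw [det_transpose]
    exact isUnit_nonsing_inv_det _ ((isUnit_iff_isUnit_det _).1 (hu t))
  exact eq_zero_of_mulVec_eq_zero hdet.ne_zero hzt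

end IsSTM

end MatrixODE

theorem stmt_5_general {n p : ℕ}
    (A Q : ℝ → Matrix (Fin n) (Fin n) ℝ) (B : ℝ → Matrix (Fin n) (Fin p) ℝ)
    (hQpsd : ∀ t, (Q t).PosSemidef)
    (Γ : ℕ → ℝ → Matrix (Fin n) (Fin p) ℝ)
    (hΓ : IsCtrbMatSeq A B Γ)
    (hTC : TotallyControllable Γ)
    (Φ : ℝ → ℝ → Matrix (Fin n ⊕ Fin n) (Fin n ⊕ Fin n) ℝ)
    (hΦ : IsSTM (fun t => fromBlocks (A t) (-(B t * (B t)ᵀ)) (-(Q t)) (-(A t)ᵀ)) Φ)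
    (s t₁ t₂ : ℝ) (hs : s ∈ Set.Icc (0 : ℝ) 1) (ht₁ : t₁ ∈ Set.Icc (0 : ℝ) 1)
    (ht₂ : t₂ ∈ Set.Icc (0 : ℝ) 1) :
    (s < t₁ → t₁ < t₂ →
      (-(((Φ t₁ s).toBlocks₁₁)⁻¹ * (Φ t₁ s).toBlocks₁₂)).PosDef ∧
      (-(((Φ t₂ s).toBlocks₁₁)⁻¹ * (Φ t₂ s).toBlocks₁₂) -
        -(((Φ t₁ s).toBlocks₁₁)⁻¹ * (Φ t₁ s).toBlocks₁₂)).PosDef) ∧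
    (t₁ < t₂ → t₂ < s →
      (-(((Φ t₂ s).toBlocks₁₁)⁻¹ * (Φ t₂ s).toBlocks₁₂) -
        -(((Φ t₁ s).toBlocks₁₁)⁻¹ * (Φ t₁ s).toBlocks₁₂)).PosDef ∧
      (0 - -(((Φ t₂ s).toBlocks₁₁)⁻¹ * (Φ t₂ s).toBlocks₁₂)).PosDef) := by
  have hD : ∀ t, (B t * (B t)ᵀ).PosSemidef := fun t => posSemidef_self_mul_conjTranspose (B t)
  have hlt : ∀ {a b : ℝ}, 0 ≤ a → a < b → b ≤ 1 →
      (graphMatrix (Φ b s) - graphMatrix (Φ a s)).PosDef := fun ha hab hb =>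
    IsSTM.posDef_graphMatrix_sub hΦ hD hQpsd s hab (hTC.isControllableOn hΓ ha hab hb)
  have hzero : graphMatrix (Φ s s) = 0 := by rw [hΦ.1, graphMatrix_one]
  refine ⟨fun h₁ h₂ => ⟨?_, hlt ht₁.1 h₂ ht₂.2⟩, fun h₁ h₂ => ⟨hlt ht₁.1 h₁ ht₂.2, ?_⟩⟩
  · have hpos := hlt hs.1 h₁ ht₁.2
    rwa [hzero, sub_zero] at hpos
  · have hneg := hlt ht₂.1 h₂ hs.2
    rwa [hzero] at hneg

theorem stmt_5 {n p : ℕ} (hn : 1 ≤ n) (hp : 1 ≤ p)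
    (A Q : ℝ → Matrix (Fin n) (Fin n) ℝ) (B : ℝ → Matrix (Fin n) (Fin p) ℝ)
    (hA : Continuous A) (hB : Continuous B) (hQ : Continuous Q)
    (hQpsd : ∀ t, (Q t).PosSemidef)
    (hAsm : ∀ i j, ContDiff ℝ (n - 1 : ℕ) fun t => A t i j)
    (hBsm : ∀ i j, ContDiff ℝ (n : ℕ) fun t => B t i j)
    (Γ : ℕ → ℝ → Matrix (Fin n) (Fin p) ℝ)
    (hΓ : IsCtrbMatSeq A B Γ)
    (hTC : TotallyControllable Γ)
    (Φ : ℝ → ℝ → Matrix (Fin n ⊕ Fin n) (Fin n ⊕ Fin n) ℝ)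
    (hΦ : IsSTM (fun t => fromBlocks (A t) (-(B t * (B t)ᵀ)) (-(Q t)) (-(A t)ᵀ)) Φ)
    (s t₁ t₂ : ℝ) (hs : s ∈ Set.Icc (0:ℝ) 1) (ht₁ : t₁ ∈ Set.Icc (0:ℝ) 1)
    (ht₂ : t₂ ∈ Set.Icc (0:ℝ) 1) :
    (s < t₁ → t₁ < t₂ →
      (-(((Φ t₁ s).toBlocks₁₁)⁻¹ * (Φ t₁ s).toBlocks₁₂)).PosDef ∧
      (-(((Φ t₂ s).toBlocks₁₁)⁻¹ * (Φ t₂ s).toBlocks₁₂) -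
        -(((Φ t₁ s).toBlocks₁₁)⁻¹ * (Φ t₁ s).toBlocks₁₂)).PosDef) ∧
    (t₁ < t₂ → t₂ < s →
      (-(((Φ t₂ s).toBlocks₁₁)⁻¹ * (Φ t₂ s).toBlocks₁₂) -
        -(((Φ t₁ s).toBlocks₁₁)⁻¹ * (Φ t₁ s).toBlocks₁₂)).PosDef ∧
      (0 - -(((Φ t₂ s).toBlocks₁₁)⁻¹ * (Φ t₂ s).toBlocks₁₂)).PosDef) :=
  stmt_5_general A Q B hQpsd Γ hΓ hTC Φ hΦ s t₁ t₂ hs ht₁ ht₂
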